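/- Let G be a connected labeled semi-Hamiltonian graph on vertex set [n], i.e., the path L_n is a subgraph of G and {1,n} is not an edge of G. Then the minimal prime ideals of the Hankel edge ideal I_G are exactly I_X and (x_2,...,x_n); in particular, height I_G = n-1. -/

import Mathlib

open MvPolynomial

/-- The Hankel binomial `g_{ij} = x_i x_{j+1} - x_j x_{i+1}` (0-indexed vertices). -/
noncomputable def hg (n : ℕ) (K : Type*) [Field K] (i j : Fin n) :
    MvPolynomial (Fin (n + 1)) K :=
  X i.castSucc * X j.succ - X j.castSucc * X i.succ

/-- The generating set of the Hankel edge ideal of a graph `G` on `[n]`. -/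
noncomputable def hgenSet (n : ℕ) (K : Type*) [Field K] (G : SimpleGraph (Fin n)) :
    Set (MvPolynomial (Fin (n + 1)) K) :=
  { f | ∃ i j : Fin n, i < j ∧ G.Adj i j ∧ f = hg n K i j }

/-- The Hankel edge ideal `I_G`. -/
noncomputable def hankelIdeal (n : ℕ) (K : Type*) [Field K] (G : SimpleGraph (Fin n)) :
    Ideal (MvPolynomial (Fin (n + 1)) K) :=
  Ideal.span (hgenSet n K G)

/-- `I_X`, the ideal of 2-minors of the 2×n Hankel matrix, i.e. `I_{K_n}`. -/
noncomputable def IX (n : ℕ) (K : Type*) [Field K] :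
    Ideal (MvPolynomial (Fin (n + 1)) K) :=
  hankelIdeal n K ⊤

/-- The height of an ideal: the infimum of the heights of primes containing it. -/
noncomputable def ht {R : Type*} [CommRing R] (I : Ideal R) : ℕ∞ :=
  ⨅ (p : PrimeSpectrum R) (_ : I ≤ p.asIdeal), Order.height p

/-- The minimal number of generators of an ideal. -/
noncomputable def mu {R : Type*} [CommRing R] (I : Ideal R) : ℕ∞ :=
  ⨅ (s : Finset R) (_ : Ideal.span (s : Set R) = I), (s.card : ℕ∞)

/-- The arithmetical rank of an ideal. -/
noncomputable def ara {R : Type*} [CommRing R] (I : Ideal R) : ℕ∞ :=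
  ⨅ (s : Finset R) (_ : (Ideal.span (s : Set R)).radical = I.radical), (s.card : ℕ∞)

/-- The labeled path `L_n` with edges `{i, i+1}` (0-indexed). -/
def pathG (n : ℕ) : SimpleGraph (Fin n) :=
  SimpleGraph.fromRel (fun i j => (i : ℕ) + 1 = (j : ℕ))

/-- The labeled cycle `C_n` with edges `{i, i+1}` and `{0, n-1}` (0-indexed). -/
def cycleG (n : ℕ) : SimpleGraph (Fin n) :=
  SimpleGraph.fromRel (fun i j =>
    (i : ℕ) + 1 = (j : ℕ) ∨ ((i : ℕ) = 0 ∧ (j : ℕ) = n - 1))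

/-- The monomial prime ideal generated by the variables with index in `[lo, hi]` (0-indexed). -/
noncomputable def Pvars (n : ℕ) (K : Type*) [Field K] (lo hi : ℕ) :
    Ideal (MvPolynomial (Fin (n + 1)) K) :=
  Ideal.span { f | ∃ i : Fin (n + 1), lo ≤ (i : ℕ) ∧ (i : ℕ) ≤ hi ∧ f = X i }


section HankelAux

/-- Variables indexed by natural numbers. -/
noncomputable def xx (n : ℕ) (K : Type*) [Field K] (k : ℕ) : MvPolynomial (Fin (n + 1)) K :=
  X (Fin.ofNat (n + 1) k)

theorem X_eq_xx (n : ℕ) (K : Type*) [Field K] (i : Fin (n + 1)) :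
    (X i : MvPolynomial (Fin (n + 1)) K) = xx n K i := by
  unfold xx
  congr 1
  apply Fin.ext
  simp [Fin.ofNat, Nat.mod_eq_of_lt i.isLt]

theorem hg_eq (n : ℕ) (K : Type*) [Field K] (i j : Fin n) :
    hg n K i j = xx n K i * xx n K (j + 1) - xx n K j * xx n K (i + 1) := by
  unfold hg
  simp only [X_eq_xx]
  simp

/-- Shifting lemma. -/
theorem shift_aux {R : Type*} [CommRing R] (n : ℕ) (x : ℕ → R)
    (h : ∀ i j, i < n → j < n → x i * x (j + 1) = x j * x (i + 1)) (k : ℕ) :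
    ∀ a b, a + k ≤ n → b + k ≤ n → x (a + k) * x b = x a * x (b + k) := by
  induction k with
  | zero => intro a b _ _; simp
  | succ k ih =>
    intro a b ha hb
    have h1 := h (a + k) b (by omega) (by omega)
    have h2 := ih a (b + 1) (by omega) (by omega)
    rw [show b + (k + 1) = b + 1 + k by ring, ← h2, h1, show a + (k + 1) = a + k + 1 by ring]
    ring

theorem quad_aux {R : Type*} [CommRing R] (n : ℕ) (x : ℕ → R)
    (h : ∀ i j, i < n → j < n → x i * x (j + 1) = x j * x (i + 1)) (a b c d : ℕ)
    (ha : a ≤ n) (hb : b ≤ n) (hc : c ≤ n) (hd : d ≤ n) (e : a + b = c + d) :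
    x a * x b = x c * x d := by
  rcases le_total a c with h1 | h1
  · obtain ⟨k, rfl⟩ := Nat.exists_eq_add_of_le h1
    obtain rfl : b = d + k := by omega
    exact (shift_aux n x h k a d hc hb).symm
  · obtain ⟨k, rfl⟩ := Nat.exists_eq_add_of_le h1
    obtain rfl : d = b + k := by omega
    exact shift_aux n x h k c b ha hd

/-- The canonical monomial of degree `d` and weight `w`. -/
def canon {R : Type*} [CommRing R] (n : ℕ) (x : ℕ → R) : ℕ → ℕ → R
  | 0, _ => 1
  | d + 1, w => if n ≤ w then x n * canon n x d (w - n) else x w * x 0 ^ d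

theorem canon_mul {R : Type*} [CommRing R] (n : ℕ) (x : ℕ → R)
    (h : ∀ i j, i < n → j < n → x i * x (j + 1) = x j * x (i + 1)) (i : ℕ) (hi : i ≤ n) (d : ℕ) :
    ∀ w, w ≤ n * d → canon n x d w * x i = canon n x (d + 1) (w + i) := by
  induction d with
  | zero =>
    intro w hw
    obtain rfl : w = 0 := by omega
    simp only [canon, zero_add]
    split_ifs with h1
    · obtain rfl : i = n := by omega
      ring
    · ring
  | succ d ih =>
    intro w hw
    rw [Nat.mul_succ] at hw
    by_cases h1 : n ≤ w
    · have := ih (w - n) (by omega)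
      rw [canon.eq_2, if_pos h1, canon.eq_2 n x (w + i) (d + 1), if_pos (by omega),
        mul_assoc, this, show w - n + i = w + i - n by omega]
    · rw [canon.eq_2, if_neg h1, canon.eq_2]
      split_ifs with h2
      · rw [canon.eq_2, if_neg (by omega)]
        have := quad_aux n x h w i n (w + i - n) (by omega) hi le_rfl (by omega) (by omega)
        linear_combination (x 0 ^ d) * this
      · have := quad_aux n x h w i (w + i) 0 (by omega) hi (by omega) (by omega) (by omega)
        linear_combination (x 0 ^ d) * this

/-- The partial parametrization maps. -/
noncomputable def phi (n : ℕ) (K : Type*) [Field K] (k : ℕ) :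
    MvPolynomial (Fin (n + 1)) K →ₐ[K] MvPolynomial (Fin (n + 1)) K :=
  aeval (fun i => if (i : ℕ) ≤ k then xx n K 0 * xx n K 1 ^ (i : ℕ) else X i)

theorem phi_xx (n : ℕ) (K : Type*) [Field K] (k i : ℕ) (hi : i ≤ n) :
    phi n K k (xx n K i) = if i ≤ k then xx n K 0 * xx n K 1 ^ i else xx n K i := by
  have : (Fin.ofNat (n + 1) i : ℕ) = i := by simp [Fin.ofNat]; omega
  simp only [phi, xx, aeval_X, this]

theorem mk_mul_iff {R : Type*} [CommRing R] (I : Ideal R) (a b c d : R) :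
    Ideal.Quotient.mk I a * Ideal.Quotient.mk I b =
      Ideal.Quotient.mk I c * Ideal.Quotient.mk I d ↔ a * b - c * d ∈ I := by
  rw [← map_mul, ← map_mul, Ideal.Quotient.eq]

theorem IX_rel (n : ℕ) (K : Type*) [Field K] (I : Ideal (MvPolynomial (Fin (n + 1)) K)) :
    IX n K ≤ I ↔ ∀ i j, i < n → j < n →
      Ideal.Quotient.mk I (xx n K i) * Ideal.Quotient.mk I (xx n K (j + 1)) =
      Ideal.Quotient.mk I (xx n K j) * Ideal.Quotient.mk I (xx n K (i + 1)) := by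
  unfold IX hankelIdeal
  rw [Ideal.span_le]
  constructor
  · intro h
    have key : ∀ i j, i < j → j < n →
      Ideal.Quotient.mk I (xx n K i) * Ideal.Quotient.mk I (xx n K (j + 1)) =
      Ideal.Quotient.mk I (xx n K j) * Ideal.Quotient.mk I (xx n K (i + 1)) := by
      intro i j hij hj
      refine (mk_mul_iff I _ _ _ _).2 (h ?_)
      refine ⟨⟨i, by omega⟩, ⟨j, hj⟩, hij, ?_, ?_⟩
      · simp; omega
      · rw [hg_eq]
    intro i j hi hj
    rcases lt_trichotomy i j with h1 | h1 | h1
    · exact key i j h1 hj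
    · rw [h1]
    · exact (key j i h1 hi).symm
  · rintro h f ⟨i, j, hij, -, rfl⟩
    have := (mk_mul_iff I _ _ _ _).1 (h i j i.2 j.2)
    rw [hg_eq]; exact this

theorem IX_eq_ker (n : ℕ) (K : Type*) [Field K] (hn : 1 ≤ n) :
    IX n K = RingHom.ker (phi n K n) := by
  apply le_antisymm
  · unfold IX hankelIdeal
    rw [Ideal.span_le]
    rintro f ⟨i, j, hij, -, rfl⟩
    have hi := i.2
    have hj := j.2
    rw [SetLike.mem_coe, RingHom.mem_ker, hg_eq, map_sub, map_mul, map_mul, phi_xx _ _ _ _ (by omega),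
      phi_xx _ _ _ _ (by omega), phi_xx _ _ _ _ (by omega), phi_xx _ _ _ _ (by omega),
      if_pos (by omega), if_pos (by omega), if_pos (by omega), if_pos (by omega)]
    ring
  · have hrel := (IX_rel n K (IX n K)).1 le_rfl
    set q := Ideal.Quotient.mk (IX n K) with hq
    set x : ℕ → MvPolynomial (Fin (n + 1)) K ⧸ IX n K := fun i => q (xx n K i) with hx
    let i0 : Fin (n + 1) := Fin.ofNat (n + 1) 0
    let i1 : Fin (n + 1) := Fin.ofNat (n + 1) 1
    have h01 : i0 ≠ i1 := by
      intro h
      have := congrArg Fin.val h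
      simp [i0, i1, Fin.ofNat] at this
      omega
    let rho : MvPolynomial (Fin (n + 1)) K →ₗ[K] MvPolynomial (Fin (n + 1)) K ⧸ IX n K :=
      (basisMonomials (Fin (n + 1)) K).constr K (fun m => canon n x (m i0) (m i1))
    have hrho : ∀ m, rho (monomial m 1) = canon n x (m i0) (m i1) := by
      intro m
      have := (basisMonomials (Fin (n + 1)) K).constr_basis K
        (fun m => canon n x (m i0) (m i1)) m
      simpa [rho] using this
    -- the image of a monomial
    have hmon : ∀ m : Fin (n + 1) →₀ ℕ, ∃ d w, w ≤ n * d ∧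
        phi n K n (monomial m 1) = xx n K 0 ^ d * xx n K 1 ^ w ∧
        q (monomial m 1) = canon n x d w := by
      intro m
      have hgen : ∀ s : Multiset (Fin (n + 1)), ∃ d w, w ≤ n * d ∧
          phi n K n ((s.map X).prod) = xx n K 0 ^ d * xx n K 1 ^ w ∧
          q ((s.map X).prod) = canon n x d w := by
        intro s
        induction s using Multiset.induction_on with
        | empty => exact ⟨0, 0, by simp, by simp, by simp [canon]⟩
        | cons i s ih =>
          obtain ⟨d, w, h1, h2, h3⟩ := ih
          have hi : (i : ℕ) ≤ n := by omega
          refine ⟨d + 1, w + i, ?_, ?_, ?_⟩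
          · rw [Nat.mul_succ]; omega
          · rw [Multiset.map_cons, Multiset.prod_cons, map_mul, h2, X_eq_xx,
              phi_xx _ _ _ _ hi, if_pos hi]
            ring
          · rw [Multiset.map_cons, Multiset.prod_cons, map_mul, h3, X_eq_xx,
              ← canon_mul n x hrel i hi d w h1, mul_comm]
      have hm : (monomial m (1 : K)) = ((Finsupp.toMultiset m).map X).prod := by
        rw [monomial_eq, Finsupp.toMultiset_map, Finsupp.prod_toMultiset]
        simp [Finsupp.prod_mapDomain_index, pow_add]
      rw [hm]
      exact hgen _
    have hcan : ∀ d w, rho (xx n K 0 ^ d * xx n K 1 ^ w) = canon n x d w := by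
      intro d w
      have : (xx n K 0 ^ d * xx n K 1 ^ w) =
          monomial (Finsupp.single i0 d + Finsupp.single i1 w) (1 : K) := by
        simp only [xx, X_pow_eq_monomial, monomial_mul, one_mul]
        rfl
      rw [this, hrho]
      simp [h01, h01.symm, Finsupp.single_apply]
    have hcomp : ∀ f, rho (phi n K n f) = q f := by
      intro f
      have : rho ∘ₗ (phi n K n).toLinearMap = (Ideal.Quotient.mkₐ K (IX n K)).toLinearMap := by
        apply (basisMonomials (Fin (n + 1)) K).ext
        intro m
        obtain ⟨d, w, -, h1, h2⟩ := hmon m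
        simp only [coe_basisMonomials, LinearMap.comp_apply, AlgHom.toLinearMap_apply, h1, hcan]
        exact h2.symm
      exact LinearMap.congr_fun this f
    intro f hf
    rw [RingHom.mem_ker] at hf
    have := hcomp f
    rw [hf, map_zero] at this
    exact Ideal.Quotient.eq_zero_iff_mem.1 this.symm

theorem IX_le_of_ne {D : Type*} [CommRing D] [IsDomain D] (n : ℕ) (x : ℕ → D)
    (h : ∀ i, i + 2 ≤ n → x i * x (i + 2) = x (i + 1) * x (i + 1))
    (h0 : ∀ i, i ≤ n → x i ≠ 0) (i k : ℕ) (hk : i + k < n) :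
    x i * x (i + k + 1) = x (i + k) * x (i + 1) := by
  induction k with
  | zero => simp
  | succ k ih =>
    have h1 := ih (by omega)
    have h2 := h (i + k) (by omega)
    apply mul_left_cancel₀ (h0 (i + k) (by omega))
    rw [show i + (k + 1) + 1 = i + k + 2 by ring, show i + (k + 1) = i + k + 1 by ring]
    linear_combination x i * h2 + x (i + k + 1) * h1

theorem zero_spread {D : Type*} [CommRing D] [IsDomain D] (n : ℕ) (x : ℕ → D)
    (h : ∀ i, i + 2 ≤ n → x i * x (i + 2) = x (i + 1) * x (i + 1))
    (k : ℕ) (hk : k ≤ n) (h0 : x k = 0) (j : ℕ) (hj : 1 ≤ j) (hjn : j + 1 ≤ n) : x j = 0 := by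
  have up : ∀ m, k + m + 1 ≤ n → x (k + m) = 0 := by
    intro m
    induction m with
    | zero => intro _; simpa using h0
    | succ m ih =>
      intro hm
      have h1 := ih (by omega)
      have h2 := h (k + m) (by omega)
      rw [h1, zero_mul] at h2
      exact mul_self_eq_zero.1 h2.symm
  have down : ∀ m, m + 1 ≤ k → x (k - m) = 0 := by
    intro m
    induction m with
    | zero => intro _; simpa using h0
    | succ m ih =>
      intro hm
      have h1 := ih (by omega)
      rcases Nat.lt_or_ge (m + 1) k with h3 | h3
      · have h2 := h (k - m - 2) (by omega)
        rw [show k - m - 2 + 2 = k - m by omega, h1, mul_zero,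
          show k - m - 2 + 1 = k - (m + 1) by omega] at h2
        exact mul_self_eq_zero.1 h2.symm
      · omega
  rcases le_total k j with h1 | h1
  · have := up (j - k) (by omega)
    rwa [show k + (j - k) = j by omega] at this
  · have := down (k - j) (by omega)
    rwa [show k - (k - j) = j by omega] at this

theorem dichotomy (n : ℕ) (K : Type*) [Field K]
    (G : SimpleGraph (Fin n)) (hpath : pathG n ≤ G)
    (P : Ideal (MvPolynomial (Fin (n + 1)) K)) [P.IsPrime] (hP : hankelIdeal n K G ≤ P) :
    IX n K ≤ P ∨ Pvars n K 1 (n - 1) ≤ P := by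
  set x : ℕ → MvPolynomial (Fin (n + 1)) K ⧸ P := fun i => Ideal.Quotient.mk P (xx n K i) with hx
  have h : ∀ i, i + 2 ≤ n → x i * x (i + 2) = x (i + 1) * x (i + 1) := by
    intro i hi
    simp only [hx]
    refine (mk_mul_iff P _ _ _ _).2 (hP ?_)
    apply Ideal.subset_span
    refine ⟨⟨i, by omega⟩, ⟨i + 1, by omega⟩, by simp, ?_, ?_⟩
    · apply hpath
      simp [pathG]
    · rw [hg_eq]
  by_cases h0 : ∀ i, i ≤ n → x i ≠ 0
  · left
    rw [IX_rel]
    intro i j hi hj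
    rcases le_total i j with h1 | h1
    · have := IX_le_of_ne n x h h0 i (j - i) (by omega)
      rwa [show i + (j - i) = j by omega] at this
    · have := IX_le_of_ne n x h h0 j (i - j) (by omega)
      rw [show j + (i - j) = i by omega] at this
      exact this.symm
  · right
    push Not at h0
    obtain ⟨k, hk, hk0⟩ := h0
    unfold Pvars
    rw [Ideal.span_le]
    rintro f ⟨i, h1, h2, rfl⟩
    have := zero_spread n x h k hk hk0 i h1 (by omega)
    rw [SetLike.mem_coe, X_eq_xx]
    exact Ideal.Quotient.eq_zero_iff_mem.1 this

theorem hankel_mono (n : ℕ) (K : Type*) [Field K] (G : SimpleGraph (Fin n)) :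
    hankelIdeal n K G ≤ IX n K := by
  apply Ideal.span_mono
  rintro f ⟨i, j, h1, h2, h3⟩
  exact ⟨i, j, h1, by simpa using h1.ne, h3⟩

theorem xx_mem (n : ℕ) (K : Type*) [Field K] (k : ℕ) (h1 : 1 ≤ k) (h2 : k + 1 ≤ n) (m : ℕ)
    (hm : k ≤ m) : xx n K k ∈ Pvars n K 1 m := by
  apply Ideal.subset_span
  have : (Fin.ofNat (n + 1) k : ℕ) = k := by simp [Fin.ofNat]; omega
  exact ⟨_, by omega, by omega, rfl⟩

theorem hankel_le_Pvars (n : ℕ) (K : Type*) [Field K] (G : SimpleGraph (Fin n))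
    (hne : ∀ i j : Fin n, (i : ℕ) = 0 → (j : ℕ) = n - 1 → ¬ G.Adj i j) :
    hankelIdeal n K G ≤ Pvars n K 1 (n - 1) := by
  unfold hankelIdeal
  rw [Ideal.span_le]
  rintro f ⟨i, j, hij, hadj, rfl⟩
  rw [Fin.lt_def] at hij
  have hj := j.2
  rw [SetLike.mem_coe, hg_eq]
  apply sub_mem
  · by_cases hi : 1 ≤ (i : ℕ)
    · exact Ideal.mul_mem_right _ _ (xx_mem n K _ hi (by omega) _ (by omega))
    · have : (j : ℕ) ≠ n - 1 := by
        intro hj'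
        exact hne i j (by omega) hj' hadj
      exact Ideal.mul_mem_left _ _ (xx_mem n K _ (by omega) (by omega) _ (by omega))
  · exact Ideal.mul_mem_right _ _ (xx_mem n K _ (by omega) (by omega) _ (by omega))

/-- Killing the variables `1..k`. -/
noncomputable def psi (n : ℕ) (K : Type*) [Field K] (k : ℕ) :
    MvPolynomial (Fin (n + 1)) K →ₐ[K] MvPolynomial (Fin (n + 1)) K :=
  aeval (fun i => if 1 ≤ (i : ℕ) ∧ (i : ℕ) ≤ k then 0 else X i)

theorem Pvars_eq_ker (n : ℕ) (K : Type*) [Field K] (k : ℕ) :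
    Pvars n K 1 k = RingHom.ker (psi n K k) := by
  apply le_antisymm
  · unfold Pvars
    rw [Ideal.span_le]
    rintro f ⟨i, h1, h2, rfl⟩
    simp [RingHom.mem_ker, psi, h1, h2]
  · have : (Ideal.Quotient.mkₐ K (Pvars n K 1 k)).comp (psi n K k) =
        Ideal.Quotient.mkₐ K (Pvars n K 1 k) := by
      apply MvPolynomial.algHom_ext
      intro i
      simp only [AlgHom.comp_apply, psi, aeval_X]
      split_ifs with h
      · rw [map_zero]
        symm
        rw [Ideal.Quotient.mkₐ_eq_mk, Ideal.Quotient.eq_zero_iff_mem]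
        exact Ideal.subset_span ⟨i, h.1, h.2, rfl⟩
      · rfl
    intro f hf
    rw [RingHom.mem_ker] at hf
    have h := AlgHom.congr_fun this f
    rw [AlgHom.comp_apply, hf, map_zero, Ideal.Quotient.mkₐ_eq_mk] at h
    exact Ideal.Quotient.eq_zero_iff_mem.1 h.symm

theorem ker_lt_aux {R : Type*} [CommRing R] (f : ℕ → Ideal R) (hf : ∀ k, (f k).IsPrime)
    (a m : ℕ) (h : ∀ k, a ≤ k → k < a + m → f k < f (k + 1)) :
    (m : ℕ∞) ≤ Order.height (⟨f (a + m), hf _⟩ : PrimeSpectrum R) := by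
  induction m with
  | zero => simp
  | succ m ih =>
    have h1 := ih (fun k h1 h2 => h k h1 (by omega))
    have h2 : (⟨f (a + m), hf _⟩ : PrimeSpectrum R) < ⟨f (a + (m + 1)), hf _⟩ :=
      h (a + m) (by omega) (by omega)
    push_cast
    exact (add_le_add_left h1 1).trans (Order.height_add_one_le h2)

theorem Pvars_lt (n : ℕ) (K : Type*) [Field K] (k : ℕ) (hk : k + 1 < n) :
    Pvars n K 1 k < Pvars n K 1 (k + 1) := by
  refine lt_of_le_of_ne ?_ ?_
  · apply Ideal.span_mono
    rintro f ⟨i, h1, h2, h3⟩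
    exact ⟨i, h1, by omega, h3⟩
  · intro h
    have h1 := xx_mem n K (k + 1) (by omega) (by omega) (k + 1) le_rfl
    rw [← h, Pvars_eq_ker, RingHom.mem_ker] at h1
    have : (Fin.ofNat (n + 1) (k + 1) : ℕ) = k + 1 := by simp [Fin.ofNat]; omega
    simp only [psi, xx, aeval_X, this] at h1
    rw [if_neg (by omega)] at h1
    exact X_ne_zero _ h1

theorem phi_lt (n : ℕ) (K : Type*) [Field K] (k : ℕ) (h1k : 1 ≤ k) (hk : k < n) :
    RingHom.ker (phi n K k) < RingHom.ker (phi n K (k + 1)) := by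
  refine lt_of_le_of_ne ?_ ?_
  · have : (aeval (fun i : Fin (n + 1) => if (i : ℕ) = k + 1 then xx n K 0 * xx n K 1 ^ (i : ℕ)
        else X i)).comp (phi n K k) = phi n K (k + 1) := by
      apply MvPolynomial.algHom_ext
      intro i
      have e0 : (Fin.ofNat (n + 1) 0 : ℕ) = 0 := by simp [Fin.ofNat]
      have e1 : (Fin.ofNat (n + 1) 1 : ℕ) = 1 := by simp [Fin.ofNat]; omega
      have hk0 : ¬ (0 = k + 1) := by omega
      have hk1 : ¬ (1 = k + 1) := by omega
      simp only [AlgHom.comp_apply, phi, aeval_X]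
      by_cases h1 : (i : ℕ) ≤ k
      · rw [if_pos h1, if_pos (by omega), map_mul, map_pow]
        simp only [xx, aeval_X, e0, e1, if_neg hk0, if_neg hk1]
      · rw [if_neg h1, aeval_X]
        by_cases h2 : (i : ℕ) = k + 1
        · rw [if_pos h2, if_pos (by omega)]
        · rw [if_neg h2, if_neg (by omega)]
    intro f hf
    rw [RingHom.mem_ker] at hf ⊢
    rw [← this, AlgHom.comp_apply, hf, map_zero]
  · intro h
    have h1 : xx n K 0 * xx n K (k + 1) - xx n K 1 * xx n K k ∈ RingHom.ker (phi n K (k + 1)) := by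
      rw [RingHom.mem_ker, map_sub, map_mul, map_mul, phi_xx _ _ _ _ (by omega),
        phi_xx _ _ _ _ (by omega), phi_xx _ _ _ _ (by omega), phi_xx _ _ _ _ (by omega),
        if_pos (by omega), if_pos (by omega), if_pos (by omega), if_pos (by omega)]
      ring
    rw [← h, RingHom.mem_ker, map_sub, map_mul, map_mul, phi_xx _ _ _ _ (by omega),
        phi_xx _ _ _ _ (by omega), phi_xx _ _ _ _ (by omega), phi_xx _ _ _ _ (by omega),
        if_pos (by omega), if_neg (by omega), if_pos (by omega), if_pos (by omega)] at h1
    have h2 := congrArg (eval (fun i : Fin (n + 1) => if (i : ℕ) = 1 then (0 : K) else 1)) h1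
    have e0 : (Fin.ofNat (n + 1) 0 : ℕ) = 0 := by simp [Fin.ofNat]
    have e1 : (Fin.ofNat (n + 1) 1 : ℕ) = 1 := by simp [Fin.ofNat]; omega
    have e2 : (Fin.ofNat (n + 1) (k + 1) : ℕ) = k + 1 := by simp [Fin.ofNat]; omega
    simp only [xx, map_sub, map_mul, map_pow, eval_X, e0, e1, e2, map_zero] at h2
    simp [show k ≠ 0 by omega] at h2

theorem Pvars_height_le (n : ℕ) (K : Type*) [Field K] (h : (Pvars n K 1 (n - 1)).IsPrime) :
    Order.height (⟨_, h⟩ : PrimeSpectrum (MvPolynomial (Fin (n + 1)) K)) ≤ ((n - 1 : ℕ) : ℕ∞) := by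
  classical
  rw [← PrimeSpectrum.height_eq_orderHeight]
  refine (Ideal.height_le_spanFinrank _ h.ne_top).trans ?_
  have hs : { f | ∃ i : Fin (n + 1), 1 ≤ (i : ℕ) ∧ (i : ℕ) ≤ n - 1 ∧ f = X i } ⊆
      (((Finset.Icc 1 (n - 1)).image (xx n K) : Finset _) :
        Set (MvPolynomial (Fin (n + 1)) K)) := by
    rintro f ⟨i, h1, h2, rfl⟩
    rw [Finset.mem_coe, Finset.mem_image]
    exact ⟨i, by simp [h1, h2], (X_eq_xx n K i).symm⟩
  have hfin := (Finset.finite_toSet _).subset hs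
  have h1 : (Pvars n K 1 (n - 1)).spanFinrank ≤ _ :=
    Submodule.spanFinrank_span_le_ncard_of_finite hfin
  have h2 := Set.ncard_le_ncard hs (Finset.finite_toSet _)
  rw [Set.ncard_coe_finset] at h2
  have h3 : ((Finset.Icc 1 (n - 1)).image (xx n K)).card ≤ n - 1 :=
    Finset.card_image_le.trans (by simp)
  exact_mod_cast (h1.trans h2).trans h3

end HankelAux


/-- For a connected labeled semi-Hamiltonian graph `G` on `[n]`
(`L_n ⊆ G`, `{1,n} ∉ E(G)`), the minimal primes of `I_G` are exactly `I_X` and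
`(x_2,…,x_n)`; in particular `height I_G = n - 1`. -/
theorem stmt_3 (n : ℕ) (K : Type*) [Field K] (hn : 2 ≤ n)
    (G : SimpleGraph (Fin n)) (hG : G.Connected) (hpath : pathG n ≤ G)
    (hne : ¬ G.Adj ⟨0, by omega⟩ ⟨n - 1, by omega⟩) :
    (hankelIdeal n K G).minimalPrimes = {IX n K, Pvars n K 1 (n - 1)} ∧
      ht (hankelIdeal n K G) = ((n - 1 : ℕ) : ℕ∞) := by
  have hphi : ∀ k, (RingHom.ker (phi n K k)).IsPrime := fun k => RingHom.ker_isPrime _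
  have hPv : ∀ k, (Pvars n K 1 k).IsPrime := fun k => by
    rw [Pvars_eq_ker]; exact RingHom.ker_isPrime _
  have hIX : (IX n K).IsPrime := by rw [IX_eq_ker n K (by omega)]; exact hphi n
  have hle1 := hankel_mono n K G
  have hle2 := hankel_le_Pvars n K G (fun i j hi hj hadj => hne (by
    have e1 : i = ⟨0, by omega⟩ := Fin.ext hi
    have e2 : j = ⟨n - 1, by omega⟩ := Fin.ext hj
    rwa [← e1, ← e2]))
  have e0 : (Fin.ofNat (n + 1) 0 : ℕ) = 0 := by simp [Fin.ofNat]
  have e1 : (Fin.ofNat (n + 1) 1 : ℕ) = 1 := by simp [Fin.ofNat]; omega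
  have en : (Fin.ofNat (n + 1) n : ℕ) = n := by simp [Fin.ofNat]
  have hn1 : ¬ (Pvars n K 1 (n - 1) ≤ IX n K) := by
    intro h
    have h1 := h (xx_mem n K 1 le_rfl (by omega) (n - 1) (by omega))
    rw [IX_eq_ker n K (by omega), RingHom.mem_ker, phi_xx _ _ _ _ (by omega),
      if_pos (by omega)] at h1
    simp [xx, X_ne_zero] at h1
  have hn2 : ¬ (IX n K ≤ Pvars n K 1 (n - 1)) := by
    intro h
    have h1 : hg n K ⟨0, by omega⟩ ⟨n - 1, by omega⟩ ∈ IX n K :=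
      Ideal.subset_span ⟨_, _, by simp [Fin.lt_def]; omega,
        by simp [Fin.ext_iff]; omega, rfl⟩
    have h2 := h h1
    have h4 : xx n K (n - 1) * xx n K (0 + 1) ∈ Pvars n K 1 (n - 1) :=
      Ideal.mul_mem_right _ _ (xx_mem n K _ (by omega) (by omega) _ le_rfl)
    rw [hg_eq] at h2
    replace h2 := add_mem h2 h4
    rw [sub_add_cancel] at h2
    · simp only [show n - 1 + 1 = n by omega] at h2
      rcases (hPv (n - 1)).mem_or_mem h2 with h3 | h3
      all_goals
        rw [Pvars_eq_ker, RingHom.mem_ker] at h3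
        simp only [xx, psi, aeval_X, e0, en] at h3
        rw [if_neg (by omega)] at h3
        exact X_ne_zero _ h3
  constructor
  · ext P
    simp only [Set.mem_insert_iff, Set.mem_singleton_iff]
    constructor
    · rintro ⟨⟨hP, hle⟩, hmin⟩
      rcases dichotomy n K G hpath P hle with h | h
      · exact Or.inl (le_antisymm (hmin ⟨hIX, hle1⟩ h) h)
      · exact Or.inr (le_antisymm (hmin ⟨hPv _, hle2⟩ h) h)
    · rintro (rfl | rfl)
      · refine ⟨⟨hIX, hle1⟩, ?_⟩
        rintro Q ⟨hQ, hle⟩ hQP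
        rcases dichotomy n K G hpath Q hle with h | h
        · exact h
        · exact absurd (h.trans hQP) hn1
      · refine ⟨⟨hPv _, hle2⟩, ?_⟩
        rintro Q ⟨hQ, hle⟩ hQP
        rcases dichotomy n K G hpath Q hle with h | h
        · exact absurd (h.trans hQP) hn2
        · exact h
  · unfold ht
    apply le_antisymm
    · exact (iInf₂_le (⟨_, hPv (n - 1)⟩ : PrimeSpectrum _) hle2).trans (Pvars_height_le n K _)
    · refine le_iInf₂ fun p hp => ?_
      have := p.isPrime
      rcases dichotomy n K G hpath p.asIdeal hp with h | h
      · have h1 := ker_lt_aux (fun k => RingHom.ker (phi n K k)) hphi 1 (n - 1)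
          (fun k h1 h2 => phi_lt n K k h1 (by omega))
        refine h1.trans (Order.height_mono ?_)
        change RingHom.ker (phi n K (1 + (n - 1))) ≤ p.asIdeal
        rw [show 1 + (n - 1) = n by omega, ← IX_eq_ker n K (by omega)]
        exact h
      · have h1 := ker_lt_aux (fun k => Pvars n K 1 k) hPv 0 (n - 1)
          (fun k h1 h2 => Pvars_lt n K k (by omega))
        refine h1.trans (Order.height_mono ?_)
        change Pvars n K 1 (0 + (n - 1)) ≤ p.asIdeal
        rw [zero_add]
        exact h
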